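/- Let μ_k (k ∈ ℕ) and μ be Borel probability measures on ℝ^d, absolutely continuous with respect to Lebesgue measure, and ν_k, ν Borel probability measures on ℝ^d, all with finite second moments, such that d_2(μ_k, μ) → 0 and d_2(ν_k, ν) → 0. Let T_k, T be Borel maps with (T_k)_# μ_k = ν_k and T_# μ = ν whose induced couplings (id × T_k)_# μ_k and (id × T)_# μ are optimal for the quadratic cost. For t ∈ [0,1] set T_{k,t} = (1−t)·id + t·T_k and T_t = (1−t)·id + t·T, and let μ_{k,t} = (T_{k,t})_# μ_k, μ_t = (T_t)_# μ be the displacement interpolations. Then: (i) sup_{t∈[0,1]} d_2(μ_{k,t}, μ_t) → 0 as k → ∞; and (ii) there exist couplings θ_k of μ and μ_k such that sup_{t∈[0,1]} ∫ ( |T_t(x) − T_{k,t}(y)|² + |(T(x) − x) − (T_k(y) − y)|² ) dθ_k(x,y) → 0 as k → ∞. -/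

import Mathlib

open Set MeasureTheory Filter
open scoped ENNReal Topology

/-- The squared quadratic Wasserstein cost between two measures on `ℝ^d`: the infimum
over couplings of the integral of `|x − y|²`. -/
noncomputable def W2sq {d : ℕ}
    (μ ν : Measure (EuclideanSpace ℝ (Fin d))) : ℝ≥0∞ :=
  sInf { C | ∃ π : Measure (EuclideanSpace ℝ (Fin d) × EuclideanSpace ℝ (Fin d)),
    π.map Prod.fst = μ ∧ π.map Prod.snd = ν ∧
    C = ∫⁻ q, ENNReal.ofReal (‖q.1 - q.2‖ ^ 2) ∂π }

/-! Glue near-optimal couplings `θ_k` of `(μ, μ_k)` and `η_k` of `(ν_k, ν)` through `T_k` into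
couplings `ρ_k` of `(μ, ν)`; their cost tends to the optimal one. Exchanging the second components
of two transported pairs that violate monotonicity lowers the cost, so near-optimality forces `ρ_k`
to be nearly monotone with respect to the graph of `T`. For almost every `x` the point `T x` is the
only one monotonically related to this graph, because otherwise `μ` would charge a set meeting each
line of some direction at most once; hence `ρ_k` concentrates on the graph of `T`. The marginals of
`ρ_k` being fixed, there is no loss of mass at infinity and the concentration holds in `L²`. Undoing
the gluing, `T_k(y) - T(x) → 0` in `L²(θ_k)`, and both conclusions follow from Minkowski's
inequality. -/

section Couplings

variable {X Y Z : Type*} [MeasurableSpace X] [MeasurableSpace Y] [MeasurableSpace Z]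

/-- `π` is a coupling (transport plan) of `μ` and `ν`: its marginals are `μ` and `ν`. -/
def IsCoupling (π : Measure (X × Y)) (μ : Measure X) (ν : Measure Y) : Prop :=
  π.fst = μ ∧ π.snd = ν

namespace IsCoupling

variable {π : Measure (X × Y)} {μ : Measure X} {ν : Measure Y}

lemma measurePreserving_fst (h : IsCoupling π μ ν) : MeasurePreserving Prod.fst π μ :=
  ⟨measurable_fst, h.1⟩

lemma measurePreserving_snd (h : IsCoupling π μ ν) : MeasurePreserving Prod.snd π ν :=
  ⟨measurable_snd, h.2⟩

lemma isFiniteMeasure (h : IsCoupling π μ ν) [IsFiniteMeasure μ] : IsFiniteMeasure π :=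
  ⟨by rw [← Measure.fst_univ, h.1]; exact measure_lt_top μ univ⟩

lemma isProbabilityMeasure (h : IsCoupling π μ ν) [IsProbabilityMeasure μ] :
    IsProbabilityMeasure π :=
  ⟨by rw [← Measure.fst_univ, h.1, measure_univ]⟩

lemma swap (h : IsCoupling π μ ν) : IsCoupling (π.map Prod.swap) ν μ :=
  ⟨Measure.fst_map_swap.trans h.2, Measure.snd_map_swap.trans h.1⟩

lemma smul (h : IsCoupling π μ ν) (c : ℝ≥0∞) : IsCoupling (c • π) (c • μ) (c • ν) :=
  ⟨(Measure.map_smul c π Prod.fst).trans (congrArg _ h.1),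
    (Measure.map_smul c π Prod.snd).trans (congrArg _ h.2)⟩

lemma add {π' : Measure (X × Y)} {μ' : Measure X} {ν' : Measure Y} (h : IsCoupling π μ ν)
    (h' : IsCoupling π' μ' ν') : IsCoupling (π + π') (μ + μ') (ν + ν') :=
  ⟨by rw [Measure.fst_add, h.1, h'.1], by rw [Measure.snd_add, h.2, h'.2]⟩

end IsCoupling

lemma isCoupling_prod (μ : Measure X) (ν : Measure Y) [IsProbabilityMeasure μ]
    [IsProbabilityMeasure ν] : IsCoupling (μ.prod ν) μ ν :=
  ⟨Measure.fst_prod, Measure.snd_prod⟩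

lemma isCoupling_map_prodMk {Q : Measure Z} {μ : Measure X} {ν : Measure Y} {f : Z → X} {g : Z → Y}
    (hf : MeasurePreserving f Q μ) (hg : MeasurePreserving g Q ν) :
    IsCoupling (Q.map fun z => (f z, g z)) μ ν :=
  ⟨(Measure.fst_map_prodMk hg.measurable).trans hf.map_eq,
    (Measure.snd_map_prodMk hf.measurable).trans hg.map_eq⟩

-- The conditional law of `Z` given `Y` under `η` is attached to `P` along `f`.
lemma exists_measurePreserving_fst_prodMap [StandardBorelSpace Z] [Nonempty Z] {P : Measure X}
    {η : Measure (Y × Z)} [IsFiniteMeasure P] [IsFiniteMeasure η] {f : X → Y}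
    (hf : MeasurePreserving f P η.fst) :
    ∃ Q : Measure (X × Z), MeasurePreserving Prod.fst Q P ∧
      MeasurePreserving (Prod.map f id) Q η := by
  have hprod : Measurable (Prod.map f (id : Z → Z)) := hf.measurable.prodMap measurable_id
  refine ⟨P.compProd (η.condKernel.comap f hf.measurable),
    ⟨measurable_fst, Measure.fst_compProd _ _⟩, hprod, ?_⟩
  ext s hs
  conv_rhs => rw [← η.disintegrate η.condKernel, Measure.compProd_apply hs, ← hf.lintegral_comp
    (ProbabilityTheory.Kernel.measurable_kernel_prodMk_left hs)]
  rw [Measure.map_apply hprod hs, Measure.compProd_apply (hprod hs)]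
  rfl

lemma map_piecewise_add_map_piecewise {P : Measure X} {f g : X → Y} (hf : Measurable f)
    (hg : Measurable g) {s : Set X} [DecidablePred (· ∈ s)] (hs : MeasurableSet s) :
    P.map (s.piecewise f g) + P.map (s.piecewise g f) = P.map f + P.map g := by
  ext A hA
  have split (h : X → Y) : P (h ⁻¹' A) = P (s ∩ h ⁻¹' A) + P (sᶜ ∩ h ⁻¹' A) := by
    rw [← measure_inter_add_sdiff (h ⁻¹' A) hs, inter_comm, sdiff_eq, inter_comm sᶜ]
  have piece (u v : X → Y) (hu : Measurable u) (hv : Measurable v) :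
      P.map (s.piecewise u v) A = P (s ∩ u ⁻¹' A) + P (sᶜ ∩ v ⁻¹' A) := by
    rw [Measure.map_apply (hu.piecewise hs hv) hA, split, piecewise_preimage]
    congr 2 <;> ext x <;> by_cases hx : x ∈ s <;> simp [hx, Set.ite]
  rw [Measure.add_apply, Measure.add_apply, piece f g hf hg, piece g f hg hf,
    Measure.map_apply hf hA, Measure.map_apply hg hA, split f, split g]
  ring

end Couplings

section Wasserstein

variable {E : Type*} [NormedAddCommGroup E] [MeasurableSpace E]

/-- The `p`-Wasserstein distance on a normed group, with values in `ℝ≥0∞` and no moment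
assumption on the measures; it is `⊤` when there is no coupling. -/
noncomputable def wassersteinEDist (p : ℝ≥0∞) (μ ν : Measure E) : ℝ≥0∞ :=
  ⨅ (π : Measure (E × E)) (_ : IsCoupling π μ ν), eLpNorm (fun q => q.1 - q.2) p π

variable {p : ℝ≥0∞} {μ ν ξ : Measure E}

lemma wassersteinEDist_le {π : Measure (E × E)} (h : IsCoupling π μ ν) :
    wassersteinEDist p μ ν ≤ eLpNorm (fun q => q.1 - q.2) p π :=
  iInf₂_le π h

lemma wassersteinEDist_sq (μ ν : Measure E) : wassersteinEDist p μ ν ^ 2 =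
    ⨅ (π : Measure (E × E)) (_ : IsCoupling π μ ν), eLpNorm (fun q => q.1 - q.2) p π ^ 2 :=
  (ENNReal.powOrderIso 2 two_ne_zero).map_iInf₂ _

lemma exists_isCoupling_eLpNorm_lt {c : ℝ≥0∞} (h : wassersteinEDist p μ ν < c) :
    ∃ π, IsCoupling π μ ν ∧ eLpNorm (fun q => q.1 - q.2) p π < c := by
  simpa [wassersteinEDist, iInf_lt_iff] using h

lemma exists_isCoupling_eLpNorm_le_add (μ ν : Measure E) [IsProbabilityMeasure μ]
    [IsProbabilityMeasure ν] {δ : ℝ≥0∞} (hδ : δ ≠ 0) :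
    ∃ π, IsCoupling π μ ν ∧
      eLpNorm (fun q => q.1 - q.2) p π ≤ wassersteinEDist p μ ν + δ := by
  by_cases htop : wassersteinEDist p μ ν = ⊤
  · exact ⟨μ.prod ν, isCoupling_prod μ ν, by simp [htop]⟩
  · obtain ⟨π, hπ, hlt⟩ := exists_isCoupling_eLpNorm_lt (ENNReal.lt_add_right htop hδ)
    exact ⟨π, hπ, hlt.le⟩

lemma exists_isCoupling_tendsto_eLpNorm {μ ν : ℕ → Measure E} [∀ k, IsProbabilityMeasure (μ k)]
    [∀ k, IsProbabilityMeasure (ν k)]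
    (h : Tendsto (fun k => wassersteinEDist p (μ k) (ν k)) atTop (𝓝 0)) :
    ∃ π : ℕ → Measure (E × E), (∀ k, IsCoupling (π k) (μ k) (ν k)) ∧
      Tendsto (fun k => eLpNorm (fun q => q.1 - q.2) p (π k)) atTop (𝓝 0) := by
  choose π hπ hle using fun k => exists_isCoupling_eLpNorm_le_add (p := p) (μ k) (ν k)
    (δ := (k : ℝ≥0∞)⁻¹) (ENNReal.inv_ne_zero.2 (ENNReal.natCast_ne_top k))
  refine ⟨π, hπ, tendsto_of_tendsto_of_tendsto_of_le_of_le tendsto_const_nhds ?_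
    (fun _ => zero_le) hle⟩
  simpa using h.add ENNReal.tendsto_inv_nat_nhds_zero

lemma wassersteinEDist_ne_top_of_memLp [IsProbabilityMeasure μ] [IsProbabilityMeasure ν]
    (hμ : MemLp id p μ) (hν : MemLp id p ν) : wassersteinEDist p μ ν ≠ ⊤ := by
  refine ne_top_of_le_ne_top ?_ (wassersteinEDist_le (isCoupling_prod μ ν))
  exact ((hμ.comp_measurePreserving measurePreserving_fst).sub
    (hν.comp_measurePreserving measurePreserving_snd)).eLpNorm_ne_top

lemma lintegral_ofReal_norm_sq {α F : Type*} [MeasurableSpace α] [NormedAddCommGroup F]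
    (m : Measure α) (f : α → F) :
    ∫⁻ x, ENNReal.ofReal (‖f x‖ ^ 2) ∂m = eLpNorm f 2 m ^ 2 := by
  have h := eLpNorm_nnreal_pow_eq_lintegral (μ := m) (f := f) (p := 2) two_ne_zero
  norm_num at h
  simp only [h, ENNReal.ofReal_pow (norm_nonneg _), ofReal_norm]

lemma mul_wassersteinEDist_sq_le {π : Measure (E × E)} {c : ℝ≥0∞} (hc : c ≠ 0) (hc' : c ≠ ⊤)
    (h : IsCoupling π (c • μ) (c • ν)) :
    c * wassersteinEDist 2 μ ν ^ 2 ≤ eLpNorm (fun q => q.1 - q.2) 2 π ^ 2 := by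
  have hcoupling : IsCoupling (c⁻¹ • π) μ ν := by
    simpa [smul_smul, ENNReal.inv_mul_cancel hc hc'] using h.smul c⁻¹
  rw [ENNReal.mul_le_iff_le_inv hc hc']
  calc wassersteinEDist 2 μ ν ^ 2 ≤ eLpNorm (fun q => q.1 - q.2) 2 (c⁻¹ • π) ^ 2 := by
        gcongr; exact wassersteinEDist_le hcoupling
    _ = c⁻¹ * eLpNorm (fun q => q.1 - q.2) 2 π ^ 2 := by
        rw [← lintegral_ofReal_norm_sq, lintegral_smul_measure, lintegral_ofReal_norm_sq,
          smul_eq_mul]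

variable [SecondCountableTopology E] [BorelSpace E]

lemma eLpNorm_fst_sub_snd_map {α : Type*} [MeasurableSpace α] {Q : Measure α} {f g : α → E}
    (hf : Measurable f) (hg : Measurable g) :
    eLpNorm (fun q => q.1 - q.2) p (Q.map fun a => (f a, g a)) = eLpNorm (f - g) p Q :=
  eLpNorm_map_measure (by fun_prop) (by fun_prop)

lemma IsCoupling.eLpNorm_fst_sub_map_snd_le {π : Measure (E × E)} (hπ : IsCoupling π μ ν)
    (hp : 1 ≤ p) {T : E → E} (hT : Measurable T) :
    eLpNorm (fun q => q.1 - T q.2) p π ≤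
      eLpNorm (fun q => q.1 - q.2) p π + eLpNorm (fun x => x - T x) p ν := by
  rw [← eLpNorm_comp_measurePreserving (by fun_prop) hπ.measurePreserving_snd]
  have hsplit : (fun q : E × E => q.1 - T q.2) =
      (fun q => q.1 - q.2) + (fun x => x - T x) ∘ Prod.snd :=
    funext fun q => (sub_add_sub_cancel ..).symm
  rw [hsplit]
  exact eLpNorm_add_le (by fun_prop) (by fun_prop) hp

lemma eLpNorm_fst_sub_snd_map_swap (π : Measure (E × E)) :
    eLpNorm (fun q => q.1 - q.2) p (π.map Prod.swap) = eLpNorm (fun q => q.1 - q.2) p π :=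
  (eLpNorm_fst_sub_snd_map measurable_snd measurable_fst).trans (eLpNorm_sub_comm _ _ _ _)

lemma wassersteinEDist_comm (μ ν : Measure E) :
    wassersteinEDist p μ ν = wassersteinEDist p ν μ := by
  suffices h : ∀ μ ν : Measure E, wassersteinEDist p μ ν ≤ wassersteinEDist p ν μ from
    (h μ ν).antisymm (h ν μ)
  exact fun μ ν => le_iInf₂ fun π hπ =>
    (wassersteinEDist_le hπ.swap).trans_eq (eLpNorm_fst_sub_snd_map_swap π)

lemma exists_isCoupling_glue [CompleteSpace E] (hp : 1 ≤ p) {X : Type*} [MeasurableSpace X]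
    {P : Measure X} [IsFiniteMeasure P] {η : Measure (E × E)} [IsFiniteMeasure ν]
    (hη : IsCoupling η ν ξ) {a f : X → E} (ha : MeasurePreserving a P μ)
    (hf : MeasurePreserving f P ν) :
    ∃ ρ : Measure (E × E), IsCoupling ρ μ ξ ∧ ∀ b : E → E, Measurable b →
      eLpNorm (fun q => b q.1 - q.2) p ρ ≤
        eLpNorm (fun x => b (a x) - f x) p P + eLpNorm (fun q => q.1 - q.2) p η ∧
      eLpNorm (fun x => b (a x) - f x) p P ≤
        eLpNorm (fun q => b q.1 - q.2) p ρ + eLpNorm (fun q => q.1 - q.2) p η := by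
  have := hη.isFiniteMeasure
  obtain ⟨Q, hQP, hQη⟩ := exists_measurePreserving_fst_prodMap (hη.1 ▸ hf)
  have ham := ha.measurable
  have hfm := hf.measurable
  have hQsnd : MeasurePreserving Prod.snd Q ξ := hη.measurePreserving_snd.comp hQη
  refine ⟨_, isCoupling_map_prodMk (ha.comp hQP) hQsnd, fun b hb => ?_⟩
  set u : X × E → E := fun z => b (a z.1) - f z.1
  set v : X × E → E := fun z => f z.1 - z.2
  have hu : AEStronglyMeasurable u Q := by fun_prop
  have hv : AEStronglyMeasurable v Q := by fun_prop
  have hP : eLpNorm (fun x => b (a x) - f x) p P = eLpNorm u p Q :=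
    (eLpNorm_comp_measurePreserving (by fun_prop) hQP).symm
  have hη : eLpNorm (fun q => q.1 - q.2) p η = eLpNorm v p Q :=
    (eLpNorm_comp_measurePreserving (by fun_prop) hQη).symm
  have hρ : eLpNorm (fun q => b q.1 - q.2) p (Q.map fun z => ((a ∘ Prod.fst) z, z.2)) =
      eLpNorm (u + v) p Q := by
    rw [eLpNorm_map_measure (by fun_prop) (by fun_prop)]
    congr 1
    ext z
    simp [u, v]
  rw [hP, hη, hρ]
  exact ⟨eLpNorm_add_le hu hv hp,
    by simpa only [add_sub_cancel_right] using eLpNorm_sub_le (hu.add hv) hv hp⟩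

lemma wassersteinEDist_triangle [CompleteSpace E] (hp : 1 ≤ p) (μ ν ξ : Measure E)
    [IsFiniteMeasure μ] [IsFiniteMeasure ν] :
    wassersteinEDist p μ ξ ≤ wassersteinEDist p μ ν + wassersteinEDist p ν ξ := by
  simp only [wassersteinEDist, ENNReal.iInf_add, ENNReal.add_iInf]
  refine le_iInf₂ fun η hη => le_iInf₂ fun θ hθ => ?_
  have := hθ.isFiniteMeasure
  obtain ⟨ρ, hρ, hcost⟩ :=
    exists_isCoupling_glue hp hη hθ.measurePreserving_fst hθ.measurePreserving_snd
  exact (iInf₂_le ρ hρ).trans (hcost id measurable_id).1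

lemma wassersteinEDist_le_add_add [CompleteSpace E] (hp : 1 ≤ p) (μ μ' ν' ν : Measure E)
    [IsFiniteMeasure μ] [IsFiniteMeasure μ'] [IsFiniteMeasure ν'] :
    wassersteinEDist p μ ν ≤
      wassersteinEDist p μ μ' + wassersteinEDist p μ' ν' + wassersteinEDist p ν' ν :=
  (wassersteinEDist_triangle hp μ ν' ν).trans <| by
    gcongr; exact wassersteinEDist_triangle hp μ μ' ν'

end Wasserstein

section Monotonicity

variable {E : Type*} [NormedAddCommGroup E] [InnerProductSpace ℝ E]

lemma ofReal_norm_sub_sq_add_of_inner_nonpos {x y a b : E} (h : inner ℝ (x - y) (a - b) ≤ 0) :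
    ENNReal.ofReal (‖x - b‖ ^ 2) + ENNReal.ofReal (‖y - a‖ ^ 2) +
        2 * ENNReal.ofReal (-inner ℝ (x - y) (a - b)) =
      ENNReal.ofReal (‖x - a‖ ^ 2) + ENNReal.ofReal (‖y - b‖ ^ 2) := by
  rw [← ENNReal.ofReal_ofNat 2, ← ENNReal.ofReal_mul zero_le_two,
    ← ENNReal.ofReal_add (by positivity) (by positivity),
    ← ENNReal.ofReal_add (by positivity) (by linarith),
    ← ENNReal.ofReal_add (by positivity) (by positivity)]
  congr 1
  simp only [norm_sub_sq_real, inner_sub_left, inner_sub_right]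
  ring

variable [MeasurableSpace E]

/-- The defect of monotonicity of `q` with respect to `σ`: the average over `p ∼ σ` of the negative
part of `⟪q.1 - p.1, q.2 - p.2⟫`, truncated at `1` so as to be finite and continuous in `q`. It
vanishes when `q` is monotonically related to the support of `σ`. -/
noncomputable def monotonicityDefect (σ : Measure (E × E)) (q : E × E) : ℝ≥0∞ :=
  ∫⁻ p, min 1 (ENNReal.ofReal (-inner ℝ (q.1 - p.1) (q.2 - p.2))) ∂σ

lemma monotonicityDefect_le (σ : Measure (E × E)) (q : E × E) :
    monotonicityDefect σ q ≤ ∫⁻ p, ENNReal.ofReal (-inner ℝ (q.1 - p.1) (q.2 - p.2)) ∂σ :=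
  lintegral_mono fun _ => min_le_right _ _

variable [SecondCountableTopology E] [BorelSpace E]

/- Draw independent pairs from `ρ` and `σ` and swap their second components exactly when this is
profitable; the two new pairs together form a coupling of `2 • μ` and `2 • ν`. -/
lemma wassersteinEDist_sq_add_lintegral_inner_le {μ ν : Measure E} [IsProbabilityMeasure μ]
    {ρ σ : Measure (E × E)} (hρ : IsCoupling ρ μ ν) (hσ : IsCoupling σ μ ν) :
    2 * wassersteinEDist 2 μ ν ^ 2 +
        2 * ∫⁻ p, ENNReal.ofReal (-inner ℝ (p.1.1 - p.2.1) (p.1.2 - p.2.2)) ∂(ρ.prod σ) ≤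
      eLpNorm (fun q => q.1 - q.2) 2 ρ ^ 2 + eLpNorm (fun q => q.1 - q.2) 2 σ ^ 2 := by
  classical
  have := hρ.isProbabilityMeasure
  have := hσ.isProbabilityMeasure
  set P := ρ.prod σ
  have hP₁ : MeasurePreserving Prod.fst P ρ := measurePreserving_fst
  have hP₂ : MeasurePreserving Prod.snd P σ := measurePreserving_snd
  set s : Set ((E × E) × E × E) := {p | inner ℝ (p.1.1 - p.2.1) (p.1.2 - p.2.2) < 0}
  have hs : MeasurableSet s := measurableSet_lt (by fun_prop) measurable_const
  have hu : Measurable fun p : (E × E) × E × E => p.1.2 := by fun_prop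
  have hv : Measurable fun p : (E × E) × E × E => p.2.2 := by fun_prop
  set f : (E × E) × E × E → E := s.piecewise (fun p => p.2.2) (fun p => p.1.2)
  set g : (E × E) × E × E → E := s.piecewise (fun p => p.1.2) (fun p => p.2.2)
  have hf : Measurable f := hv.piecewise hs hu
  have hg : Measurable g := hu.piecewise hs hv
  set A := P.map fun p => (p.1.1, f p)
  set B := P.map fun p => (p.2.1, g p)
  have hfg : P.map f + P.map g = (2 : ℝ≥0∞) • ν := by
    rw [two_smul, map_piecewise_add_map_piecewise hv hu hs]
    exact congrArg₂ (· + ·) (hσ.measurePreserving_snd.comp hP₂).map_eq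
      (hρ.measurePreserving_snd.comp hP₁).map_eq
  have hAB : IsCoupling (A + B) ((2 : ℝ≥0∞) • μ) ((2 : ℝ≥0∞) • ν) := by
    rw [← hfg, two_smul]
    exact (isCoupling_map_prodMk (hρ.measurePreserving_fst.comp hP₁)
      (hf.measurePreserving P)).add
      (isCoupling_map_prodMk (hσ.measurePreserving_fst.comp hP₂) (hg.measurePreserving P))
  grw [mul_wassersteinEDist_sq_le two_ne_zero ENNReal.ofNat_ne_top hAB]
  simp only [← lintegral_ofReal_norm_sq, lintegral_add_measure]
  rw [lintegral_map (by fun_prop) (by fun_prop), lintegral_map (by fun_prop) (by fun_prop),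
    ← hP₁.lintegral_comp (by fun_prop), ← hP₂.lintegral_comp (by fun_prop),
    ← lintegral_const_mul _ (by fun_prop), ← lintegral_add_left (by fun_prop),
    ← lintegral_add_left (by fun_prop), ← lintegral_add_left (by fun_prop)]
  refine lintegral_mono fun p => ?_
  by_cases hp : p ∈ s
  · simpa [f, g, hp] using (ofReal_norm_sub_sq_add_of_inner_nonpos hp.le).le
  · simp [f, g, hp, ENNReal.ofReal_of_nonpos (neg_nonpos.2 (not_lt.1 hp))]

lemma continuous_monotonicityDefect (σ : Measure (E × E)) [IsFiniteMeasure σ] :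
    Continuous (monotonicityDefect σ) :=
  continuous_iff_continuousAt.2 fun q => tendsto_lintegral_filter_of_dominated_convergence 1
    (Eventually.of_forall fun _ => by fun_prop)
    (Eventually.of_forall fun _ => ae_of_all _ fun _ => min_le_left _ _)
    (by simp)
    (ae_of_all _ fun p =>
      (continuous_const.min (ENNReal.continuous_ofReal.comp (by fun_prop))).tendsto q)

lemma inner_nonneg_of_monotonicityDefect_eq_zero {σ : Measure (E × E)} {p q : E × E}
    (hq : monotonicityDefect σ q = 0) (hp : p ∈ σ.support) :
    0 ≤ inner ℝ (q.1 - p.1) (q.2 - p.2) := by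
  by_contra! hlt
  have hopen : IsOpen {p : E × E | inner ℝ (q.1 - p.1) (q.2 - p.2) < 0} :=
    isOpen_lt (by fun_prop) continuous_const
  refine Measure.subset_compl_support_of_isOpen hopen ?_ hlt hp
  refine measure_mono_null (fun p hp => ?_) ((lintegral_eq_zero_iff (by fun_prop)).1 hq)
  simpa using hp

end Monotonicity

section NullOnTransversals

variable {E : Type*} [NormedAddCommGroup E] [NormedSpace ℝ E] [MeasurableSpace E]

/-- Every measurable set that meets each line of direction `v` in at most one point is `μ`-null;
the condition on `D` says that translating a point of `D` along `v` leads out of `D`. When it holds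
for a dense set of directions `v`, optimal maps from `μ` for the quadratic cost are unique. -/
def NullOnTransversals (μ : Measure E) (v : E) : Prop :=
  ∀ D, MeasurableSet D → (∀ x ∈ D, ∀ s : ℝ, 0 < s → x + s • v ∉ D) → μ D = 0

lemma nullOnTransversals_of_absolutelyContinuous [BorelSpace E] [FiniteDimensional ℝ E]
    {μ m : Measure E} [m.IsAddHaarMeasure] (hμ : μ ≪ m) (v : E) : NullOnTransversals μ v := by
  refine fun D hD htrans => hμ (measure_eq_zero_iff_ae_notMem.2 ?_)
  refine ae_mem_of_ae_add_linearMap_mem (LinearMap.toSpanSingleton ℝ E v) volume m hD.compl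
    fun y => measure_eq_zero_iff_ae_notMem.1 (Subsingleton.measure_zero ?_ volume)
  have not_before {s t : ℝ} (hs : y + s • v ∈ D) (ht : y + t • v ∈ D) : ¬s < t := fun hst =>
    htrans _ hs (t - s) (sub_pos.2 hst) (by rwa [add_assoc, ← add_smul, add_sub_cancel])
  exact fun s hs t ht => (not_lt.1 (not_before ht hs)).antisymm (not_lt.1 (not_before hs ht))

end NullOnTransversals

section Uniqueness

lemma isClosed_setOf_exists_mem_of_isCompact {X Y : Type*} [TopologicalSpace X]
    [TopologicalSpace Y] {K : Set Y} (hK : IsCompact K) {C : Set (X × Y)} (hC : IsClosed C) :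
    IsClosed {x | ∃ y ∈ K, (x, y) ∈ C} := by
  have := isCompact_iff_compactSpace.1 hK
  have hcont : Continuous fun p : X × K => (p.1, (p.2 : Y)) := by fun_prop
  convert isClosedMap_fst_of_compactSpace _ (hC.preimage hcont)
  ext x
  simp

variable {E : Type*} [NormedAddCommGroup E] [InnerProductSpace ℝ E] [SecondCountableTopology E]
  [MeasurableSpace E] [BorelSpace E] {μ : Measure E} [IsFiniteMeasure μ] {T : E → E} {K : Set E}

/- For rational `r`, the points `x` with `⟪v, T x⟫ < r` that have a partner `z ∈ K` with
`r ≤ ⟪v, z⟫` form a transversal to `v`: two of them on one line would violate monotonicity. -/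
lemma ae_inner_le_of_monotonicityDefect_eq_zero (hT : Measurable T) (hK : IsCompact K) {v : E}
    (hv : NullOnTransversals μ v) :
    ∀ᵐ x ∂μ, ∀ z ∈ K, monotonicityDefect (μ.map fun x => (x, T x)) (x, z) = 0 →
      inner ℝ v z ≤ inner ℝ v (T x) := by
  set σ := μ.map fun x => (x, T x)
  have hgraph : Measurable fun x => (x, T x) := by fun_prop
  have hsupp : ∀ᵐ x ∂μ, (x, T x) ∈ σ.support :=
    ae_of_ae_map hgraph.aemeasurable Measure.support_mem_ae
  let C (r : ℝ) : Set (E × E) := {q | monotonicityDefect σ q = 0 ∧ r ≤ inner ℝ v q.2}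
  have hC (r : ℝ) : IsClosed (C r) := by
    have hle : IsClosed {q : E × E | r ≤ inner ℝ v q.2} := isClosed_le (by fun_prop) (by fun_prop)
    exact (isClosed_eq (continuous_monotonicityDefect σ) continuous_const).inter hle
  let partner (r : ℝ) : Set E := {x | ∃ z ∈ K, (x, z) ∈ C r}
  have hnull (r : ℚ) : ∀ᵐ x ∂μ,
      x ∉ {x | (x, T x) ∈ σ.support} ∩ {x | inner ℝ v (T x) < r} ∩ partner r := by
    refine measure_eq_zero_iff_ae_notMem.1 (hv _ ?_ ?_)
    · have hlt : MeasurableSet {x | inner ℝ v (T x) < (r : ℝ)} :=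
        measurableSet_lt (by fun_prop) measurable_const
      exact ((hgraph Measure.isClosed_support.measurableSet).inter hlt).inter
        (isClosed_setOf_exists_mem_of_isCompact hK (hC r)).measurableSet
    rintro x ⟨-, z, -, hz, hrz⟩ s hs ⟨⟨hx', hx'r⟩, -⟩
    have hmono := inner_nonneg_of_monotonicityDefect_eq_zero hz hx'
    simp only [sub_add_cancel_left, inner_neg_left, inner_smul_left, inner_sub_right,
      RCLike.conj_to_real] at hmono
    simp only [mem_ofPred_eq] at hx'r hrz
    nlinarith
  filter_upwards [hsupp, ae_all_iff.2 hnull] with x hx hxr z hzK hz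
  by_contra! hlt
  obtain ⟨r, hr, hr'⟩ := exists_rat_btwn hlt
  exact hxr r ⟨⟨hx, hr⟩, z, hzK, hz, hr'.le⟩

lemma ae_eq_of_monotonicityDefect_eq_zero (hT : Measurable T) (hK : IsCompact K)
    (hμ : Dense {v | NullOnTransversals μ v}) :
    ∀ᵐ x ∂μ, ∀ z ∈ K, monotonicityDefect (μ.map fun x => (x, T x)) (x, z) = 0 → z = T x := by
  obtain ⟨S, hS, hS_count, hS_dense⟩ := hμ.exists_countable_dense_subset
  filter_upwards [(ae_ball_iff hS_count).2 fun v hv =>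
    ae_inner_le_of_monotonicityDefect_eq_zero hT hK (hS hv)] with x hx z hzK hz
  have hle : ∀ v : E, inner ℝ v z ≤ inner ℝ v (T x) := fun v =>
    hS_dense.induction (P := fun v => inner ℝ v z ≤ inner ℝ v (T x)) (fun v hv => hx v hv z hzK hz)
      (isClosed_le (by fun_prop) (by fun_prop)) v
  have hself : inner ℝ (z - T x) (z - T x) ≤ 0 := by
    rw [inner_sub_right]
    exact sub_nonpos.2 (hle _)
  exact sub_eq_zero.1 (real_inner_self_nonpos.1 hself)

end Uniqueness

section Concentration

lemma tendsto_zero_of_forall_exists_le_add {ι : Type*} {l : Filter ι} {u : ι → ℝ≥0∞}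
    (h : ∀ δ > 0, ∃ v : ι → ℝ≥0∞, Tendsto v l (𝓝 0) ∧ ∀ i, u i ≤ δ + v i) :
    Tendsto u l (𝓝 0) := by
  refine ENNReal.tendsto_nhds_zero.2 fun ε hε => ?_
  obtain ⟨v, hv, huv⟩ := h (ε / 2) (ENNReal.half_pos hε.ne')
  filter_upwards [ENNReal.tendsto_nhds_zero.1 hv (ε / 2) (ENNReal.half_pos hε.ne')] with i hi
  calc u i ≤ ε / 2 + v i := huv i
    _ ≤ ε / 2 + ε / 2 := by gcongr
    _ = ε := ENNReal.add_halves ε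

variable {X Y : Type*} [TopologicalSpace X] [MeasurableSpace X]
  [OpensMeasurableSpace X] [PseudoMetricSpace Y] [SecondCountableTopology Y] [MeasurableSpace Y]
  [BorelSpace Y] {μ : Measure X} [IsFiniteMeasure μ] {T : X → Y} {g : X × Y → ℝ≥0∞}
  {K : Set Y} {ε : ℝ}

lemma tendsto_measure_exists_le_nhdsGT_zero (hT : Measurable T) (hg : Continuous g)
    (hK : IsCompact K) (hε : 0 < ε) (hzero : ∀ᵐ x ∂μ, ∀ z ∈ K, g (x, z) = 0 → z = T x) :
    Tendsto (fun c => μ {x | ∃ z ∈ K, ε ≤ dist z (T x) ∧ g (x, z) ≤ c}) (𝓝[>] 0) (𝓝 0) := by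
  set B : ℝ≥0∞ → Set X := fun c => {x | ∃ z ∈ K, ε ≤ dist z (T x) ∧ g (x, z) ≤ c}
  have hB (c : ℝ≥0∞) : MeasurableSet (B c) := by
    have hgraph : Measurable fun x => (x, T x) := by fun_prop
    have hfar : IsClosed {p : (X × Y) × Y | ε ≤ dist p.2 p.1.2} :=
      isClosed_le (by fun_prop) (by fun_prop)
    have hlow : IsClosed {p : (X × Y) × Y | g (p.1.1, p.2) ≤ c} :=
      isClosed_le (by fun_prop) (by fun_prop)
    exact hgraph (isClosed_setOf_exists_mem_of_isCompact hK (hfar.inter hlow)).measurableSet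
  have hmono : Monotone B := fun c c' h x ⟨z, hz, hd, hle⟩ => ⟨z, hz, hd, hle.trans h⟩
  have hnull : μ (⋂ c > 0, B c) = 0 := by
    refine measure_eq_zero_iff_ae_notMem.2 (hzero.mono fun x hx hmem => ?_)
    simp only [mem_iInter] at hmem
    have hcompact : IsCompact (K ∩ {z | ε ≤ dist z (T x)}) :=
      hK.inter_right (isClosed_le (by fun_prop) (by fun_prop))
    obtain ⟨y, hy, hyfar, -⟩ := hmem 1 one_pos
    obtain ⟨z, ⟨hz, hzfar⟩, hmin⟩ := hcompact.exists_isMinOn ⟨y, hy, hyfar⟩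
      (f := fun z => g (x, z)) (by fun_prop)
    have hgz : g (x, z) = 0 := by
      refine nonpos_iff_eq_zero.1 (le_of_forall_gt fun c hc => ?_)
      obtain ⟨c', hc', hc'c⟩ := exists_between hc
      obtain ⟨w, hw, hwfar, hgw⟩ := hmem c' hc'
      exact (hmin ⟨hw, hwfar⟩).trans_lt (hgw.trans_lt hc'c)
    rw [mem_ofPred_eq, hx z hz hgz, dist_self] at hzfar
    exact hε.not_ge hzfar
  have hlim := tendsto_measure_biInter_gt (fun c _ => (hB c).nullMeasurableSet)
    (fun _ _ _ h => hmono h) ⟨1, one_pos, measure_ne_top μ _⟩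
  rwa [hnull] at hlim

variable {ι : Type*} {l : Filter ι} {ρ : ι → Measure (X × Y)}

lemma tendsto_measure_mem_and_le_dist (hρ : ∀ i, (ρ i).fst = μ) (hT : Measurable T)
    (hg : Continuous g) (hK : IsCompact K) (hε : 0 < ε)
    (hzero : ∀ᵐ x ∂μ, ∀ z ∈ K, g (x, z) = 0 → z = T x)
    (hint : Tendsto (fun i => ∫⁻ q, g q ∂(ρ i)) l (𝓝 0)) :
    Tendsto (fun i => ρ i {q | q.2 ∈ K ∧ ε ≤ dist q.2 (T q.1)}) l (𝓝 0) := by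
  refine tendsto_zero_of_forall_exists_le_add fun δ hδ => ?_
  obtain ⟨c, hBc, hc⟩ := (((ENNReal.tendsto_nhds_zero.1
    (tendsto_measure_exists_le_nhdsGT_zero hT hg hK hε hzero) δ hδ)).and
    (Ioo_mem_nhdsGT one_pos)).exists
  set B := {x | ∃ z ∈ K, ε ≤ dist z (T x) ∧ g (x, z) ≤ c}
  have hc0 : c ≠ 0 := hc.1.ne'
  have hctop : c ≠ ⊤ := hc.2.ne_top
  refine ⟨fun i => (∫⁻ q, g q ∂(ρ i)) / c, ?_, fun i => ?_⟩
  · simpa using ENNReal.Tendsto.div_const hint (.inr hc0)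
  calc ρ i {q | q.2 ∈ K ∧ ε ≤ dist q.2 (T q.1)} ≤ ρ i (Prod.fst ⁻¹' B ∪ {q | c ≤ g q}) :=
        measure_mono fun q hq => (le_total (g q) c).imp (fun h => ⟨q.2, hq.1, hq.2, h⟩) id
    _ ≤ ρ i (Prod.fst ⁻¹' B) + ρ i {q | c ≤ g q} := measure_union_le _ _
    _ ≤ (ρ i).fst B + (∫⁻ q, g q ∂(ρ i)) / c :=
        add_le_add (Measure.le_map_apply measurable_fst.aemeasurable B)
          (meas_ge_le_lintegral_div hg.aemeasurable hc0 hctop)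
    _ ≤ δ + (∫⁻ q, g q ∂(ρ i)) / c := by rw [hρ i]; gcongr

lemma IsCoupling.tendsto_measure_le_dist [CompleteSpace Y] {ν : Measure Y} [IsFiniteMeasure ν]
    (hρ : ∀ i, IsCoupling (ρ i) μ ν) (hT : Measurable T) (hg : Continuous g) (hε : 0 < ε)
    (hzero : ∀ K, IsCompact K → ∀ᵐ x ∂μ, ∀ z ∈ K, g (x, z) = 0 → z = T x)
    (hint : Tendsto (fun i => ∫⁻ q, g q ∂(ρ i)) l (𝓝 0)) :
    Tendsto (fun i => ρ i {q | ε ≤ dist q.2 (T q.1)}) l (𝓝 0) := by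
  refine tendsto_zero_of_forall_exists_le_add fun δ hδ => ?_
  obtain ⟨K, hK, hνK⟩ := isTightMeasureSet_iff_exists_isCompact_measure_compl_le.1
    (isTightMeasureSet_singleton (μ := ν)) δ hδ
  refine ⟨_, tendsto_measure_mem_and_le_dist (fun i => (hρ i).1) hT hg hK hε (hzero K hK) hint,
    fun i => ?_⟩
  calc ρ i {q | ε ≤ dist q.2 (T q.1)}
      ≤ ρ i (Prod.snd ⁻¹' Kᶜ ∪ {q | q.2 ∈ K ∧ ε ≤ dist q.2 (T q.1)}) :=
        measure_mono fun q hq => (em (q.2 ∈ K)).symm.imp id fun h => ⟨h, hq⟩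
    _ ≤ ρ i (Prod.snd ⁻¹' Kᶜ) + ρ i {q | q.2 ∈ K ∧ ε ≤ dist q.2 (T q.1)} := measure_union_le _ _
    _ ≤ δ + ρ i {q | q.2 ∈ K ∧ ε ≤ dist q.2 (T q.1)} := by
        grw [Measure.le_map_apply measurable_snd.aemeasurable,
          (hρ i).measurePreserving_snd.map_eq, hνK ν rfl]

end Concentration

section LpConvergence

variable {ι Y E : Type*} {Ω : ι → Type*} [∀ i, MeasurableSpace (Ω i)] {l : Filter ι}
  {ρ : ∀ i, Measure (Ω i)} [MeasurableSpace Y] [NormedAddCommGroup E] {ν : Measure Y}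
  {p : ℝ≥0∞}

lemma tendsto_eLpNorm_indicator_comp {f : ∀ i, Ω i → Y} {h : Y → E} {A : ∀ i, Set (Ω i)}
    (hp : 1 ≤ p) (hp' : p ≠ ⊤) (hh : MemLp h p ν) (hhm : StronglyMeasurable h)
    (hf : ∀ i, MeasurePreserving (f i) (ρ i) ν) (hA : ∀ i, MeasurableSet (A i))
    (hρA : Tendsto (fun i => ρ i (A i)) l (𝓝 0)) :
    Tendsto (fun i => eLpNorm ((A i).indicator (h ∘ f i)) p (ρ i)) l (𝓝 0) := by
  have hp0 : 0 < p.toReal := ENNReal.toReal_pos (one_pos.trans_le hp).ne' hp'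
  refine tendsto_zero_of_forall_exists_le_add fun δ hδ => ?_
  obtain ⟨ε, hε, hεδ⟩ := ENNReal.lt_iff_exists_nnreal_btwn.1 hδ
  obtain ⟨M, hM, hMε⟩ := hh.eLpNorm_indicator_norm_ge_pos_le hhm (ε := ε) (by simpa using hε)
  set big : Y → E := {y | M ≤ ‖h y‖₊}.indicator h
  have hbig : StronglyMeasurable big :=
    hhm.indicator (measurableSet_le measurable_const hhm.nnnorm.measurable.subtype_coe)
  refine ⟨fun i => eLpNorm ((A i).indicator fun _ => M) p (ρ i), ?_, fun i => ?_⟩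
  · have hpow : Tendsto (fun i => ‖M‖ₑ * ρ i (A i) ^ (1 / p.toReal)) l (𝓝 (‖M‖ₑ * 0)) := by
      refine ENNReal.Tendsto.const_mul ?_ (.inr enorm_ne_top)
      simpa [hp0] using hρA.ennrpow_const (1 / p.toReal)
    simpa only [mul_zero, eLpNorm_indicator_const (hA _) (one_pos.trans_le hp).ne' hp'] using hpow
  have hsplit (x : Ω i) : ‖(A i).indicator (h ∘ f i) x‖ ≤
      ‖big (f i x)‖ + (A i).indicator (fun _ => M) x := by
    by_cases hx : x ∈ A i
    · by_cases hMx : M ≤ ‖h (f i x)‖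
      · simp [big, hx, hMx, hM.le]
      · simp [big, hx, hMx, (not_le.1 hMx).le]
    · simp [hx]
  calc eLpNorm ((A i).indicator (h ∘ f i)) p (ρ i)
      ≤ eLpNorm (fun x => ‖big (f i x)‖ + (A i).indicator (fun _ => M) x) p (ρ i) :=
        eLpNorm_mono_real hsplit
    _ ≤ eLpNorm (fun x => ‖big (f i x)‖) p (ρ i) + eLpNorm ((A i).indicator fun _ => M) p (ρ i) :=
        eLpNorm_add_le (hbig.comp_measurable (hf i).measurable).norm.aestronglyMeasurable
          (stronglyMeasurable_const.indicator (hA i)).aestronglyMeasurable hp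
    _ ≤ δ + eLpNorm ((A i).indicator fun _ => M) p (ρ i) := by
        gcongr
        rw [eLpNorm_norm]
        exact (eLpNorm_comp_measurePreserving hbig.aestronglyMeasurable (hf i)).trans_le
          (hMε.trans (by simpa using hεδ.le))

variable [SecondCountableTopology E] [MeasurableSpace E] [BorelSpace E]

lemma tendsto_eLpNorm_sub_of_tendsto_measure {ν : Measure E} [IsFiniteMeasure ν]
    {f g : ∀ i, Ω i → E} (hp : 1 ≤ p) (hp' : p ≠ ⊤) (hν : MemLp id p ν)
    (hf : ∀ i, MeasurePreserving (f i) (ρ i) ν) (hg : ∀ i, MeasurePreserving (g i) (ρ i) ν)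
    (hfg : ∀ ε > 0, Tendsto (fun i => ρ i {x | ε ≤ ‖f i x - g i x‖}) l (𝓝 0)) :
    Tendsto (fun i => eLpNorm (f i - g i) p (ρ i)) l (𝓝 0) := by
  refine tendsto_zero_of_forall_exists_le_add fun δ hδ => ?_
  obtain ⟨ε, hε, hεδ⟩ := ENNReal.exists_nnreal_pos_mul_lt
    (ENNReal.rpow_ne_top_of_nonneg (inv_nonneg.2 p.toReal_nonneg) (measure_ne_top ν univ)) hδ.ne'
  have hfm (i) : Measurable (f i) := (hf i).measurable
  have hgm (i) : Measurable (g i) := (hg i).measurable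
  set A : ∀ i, Set (Ω i) := fun i => {x | (ε : ℝ) ≤ ‖f i x - g i x‖}
  have hA (i) : MeasurableSet (A i) := measurableSet_le measurable_const (by fun_prop)
  have hindicator {h : ∀ i, Ω i → E} (hh : ∀ i, MeasurePreserving (h i) (ρ i) ν) :=
    tendsto_eLpNorm_indicator_comp hp hp' hν stronglyMeasurable_id hh hA (hfg ε hε)
  refine ⟨_, by simpa only [add_zero] using (hindicator hf).add (hindicator hg), fun i => ?_⟩
  have hsmall : eLpNorm ((A i)ᶜ.indicator (f i - g i)) p (ρ i) ≤ δ := by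
    refine (eLpNorm_le_of_ae_bound (C := ε) (ae_of_all _ fun x => ?_)).trans ?_
    · by_cases hx : x ∈ A i
      · simp [hx]
      · simpa [hx] using (not_le.1 hx).le
    · rw [← (hf i).map_eq, Measure.map_apply (hfm i) .univ, preimage_univ] at hεδ
      rw [ENNReal.ofReal_coe_nnreal, mul_comm]
      exact hεδ.le
  have hsplit : f i - g i = (A i)ᶜ.indicator (f i - g i) +
      ((A i).indicator (f i) - (A i).indicator (g i)) := by
    rw [← indicator_sub', indicator_compl_add_self]
  calc eLpNorm (f i - g i) p (ρ i)
      ≤ eLpNorm ((A i)ᶜ.indicator (f i - g i)) p (ρ i) +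
          eLpNorm ((A i).indicator (f i) - (A i).indicator (g i)) p (ρ i) := by
        conv_lhs => rw [hsplit]
        exact eLpNorm_add_le (((hfm i).sub (hgm i)).indicator (hA i).compl).aestronglyMeasurable
          (((hfm i).indicator (hA i)).sub ((hgm i).indicator (hA i))).aestronglyMeasurable hp
    _ ≤ δ + (eLpNorm ((A i).indicator (f i)) p (ρ i) + eLpNorm ((A i).indicator (g i)) p (ρ i)) :=
        add_le_add hsmall (eLpNorm_sub_le ((hfm i).indicator (hA i)).aestronglyMeasurable
          ((hgm i).indicator (hA i)).aestronglyMeasurable hp)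

end LpConvergence

section Stability

variable {E : Type*} [NormedAddCommGroup E] [InnerProductSpace ℝ E] [SecondCountableTopology E]
  [MeasurableSpace E] [BorelSpace E] {ι : Type*} {l : Filter ι} {μ ν : Measure E}
  [IsProbabilityMeasure μ] {ρ : ι → Measure (E × E)}

lemma IsCoupling.tendsto_lintegral_monotonicityDefect {σ : Measure (E × E)}
    (hσ : IsCoupling σ μ ν) (hρ : ∀ i, IsCoupling (ρ i) μ ν) (hfin : wassersteinEDist 2 μ ν ≠ ⊤)
    (hσopt : eLpNorm (fun q => q.1 - q.2) 2 σ = wassersteinEDist 2 μ ν)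
    (hcost : Tendsto (fun i => eLpNorm (fun q => q.1 - q.2) 2 (ρ i)) l
      (𝓝 (wassersteinEDist 2 μ ν))) :
    Tendsto (fun i => ∫⁻ q, monotonicityDefect σ q ∂(ρ i)) l (𝓝 0) := by
  set W := wassersteinEDist 2 μ ν
  have hWsq : W ^ 2 ≠ ⊤ := ENNReal.pow_ne_top hfin
  have := hσ.isProbabilityMeasure
  have hle (i) : ∫⁻ q, monotonicityDefect σ q ∂(ρ i) ≤
      eLpNorm (fun q => q.1 - q.2) 2 (ρ i) ^ 2 - W ^ 2 := by
    set I := ∫⁻ p, ENNReal.ofReal (-inner ℝ (p.1.1 - p.2.1) (p.1.2 - p.2.2)) ∂((ρ i).prod σ)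
    have hexchange : W ^ 2 + 2 * I ≤ eLpNorm (fun q => q.1 - q.2) 2 (ρ i) ^ 2 := by
      refine (ENNReal.add_le_add_iff_right hWsq).1 ?_
      calc W ^ 2 + 2 * I + W ^ 2 = 2 * W ^ 2 + 2 * I := by ring
        _ ≤ eLpNorm (fun q => q.1 - q.2) 2 (ρ i) ^ 2 + W ^ 2 := by
            simpa only [hσopt] using wassersteinEDist_sq_add_lintegral_inner_le (hρ i) hσ
    calc ∫⁻ q, monotonicityDefect σ q ∂(ρ i) ≤ I := by
          simp only [I]
          rw [lintegral_prod _ (by fun_prop)]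
          exact lintegral_mono fun q => monotonicityDefect_le σ q
      _ ≤ 2 * I := le_mul_of_one_le_left' one_le_two
      _ ≤ _ := ENNReal.le_sub_of_add_le_left hWsq hexchange
  refine tendsto_of_tendsto_of_tendsto_of_le_of_le tendsto_const_nhds ?_ (fun _ => zero_le) hle
  simpa using
    ENNReal.Tendsto.sub (ENNReal.Tendsto.pow (n := 2) hcost) tendsto_const_nhds (.inr hWsq)

theorem IsCoupling.tendsto_eLpNorm_map_sub [CompleteSpace E] {T : E → E}
    (hρ : ∀ i, IsCoupling (ρ i) μ ν) (hμ : Dense {v | NullOnTransversals μ v})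
    (hν : MemLp id 2 ν) (hT : MeasurePreserving T μ ν) (hfin : wassersteinEDist 2 μ ν ≠ ⊤)
    (hTopt : eLpNorm (fun x => x - T x) 2 μ = wassersteinEDist 2 μ ν)
    (hcost : Tendsto (fun i => eLpNorm (fun q => q.1 - q.2) 2 (ρ i)) l
      (𝓝 (wassersteinEDist 2 μ ν))) :
    Tendsto (fun i => eLpNorm (fun q => T q.1 - q.2) 2 (ρ i)) l (𝓝 0) := by
  have hTm := hT.measurable
  have : IsFiniteMeasure ν := hT.map_eq ▸ inferInstance
  have hσ : IsCoupling (μ.map fun x => (x, T x)) μ ν :=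
    isCoupling_map_prodMk (MeasurePreserving.id μ) hT
  have hdefect := hσ.tendsto_lintegral_monotonicityDefect hρ hfin
    ((eLpNorm_fst_sub_snd_map measurable_id hTm).trans hTopt) hcost
  refine tendsto_eLpNorm_sub_of_tendsto_measure one_le_two ENNReal.ofNat_ne_top hν
    (fun i => hT.comp (hρ i).measurePreserving_fst) (fun i => (hρ i).measurePreserving_snd)
    fun ε hε => ?_
  simpa only [dist_eq_norm', Function.comp_apply] using IsCoupling.tendsto_measure_le_dist hρ hTm
    (continuous_monotonicityDefect _) hε
    (fun K hK => ae_eq_of_monotonicityDefect_eq_zero hTm hK hμ) hdefect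

end Stability

section Interpolation

variable {E : Type*} [NormedAddCommGroup E] [NormedSpace ℝ E]

/-- The time-`t` map `(1 - t) • id + t • T` of the displacement interpolation along `T`. -/
def displacementMap (T : E → E) (t : ℝ) (x : E) : E :=
  (1 - t) • x + t • T x

lemma displacementMap_sub_displacementMap (T T' : E → E) (t : ℝ) (x y : E) :
    displacementMap T t x - displacementMap T' t y = (1 - t) • (x - y) + t • (T x - T' y) := by
  simp only [displacementMap]
  module

variable [SecondCountableTopology E] [MeasurableSpace E] [BorelSpace E] {p : ℝ≥0∞}
  {T T' : E → E} {θ : Measure (E × E)} {t : ℝ}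

lemma measurable_displacementMap (hT : Measurable T) (t : ℝ) : Measurable (displacementMap T t) :=
  (measurable_id.const_smul (1 - t)).add (hT.const_smul t)

lemma eLpNorm_displacementMap_sub_le (hp : 1 ≤ p) (hT : Measurable T) (hT' : Measurable T')
    (ht : t ∈ Icc (0 : ℝ) 1) :
    eLpNorm (fun q => displacementMap T t q.1 - displacementMap T' t q.2) p θ ≤
      eLpNorm (fun q => q.1 - q.2) p θ + eLpNorm (fun q => T q.1 - T' q.2) p θ := by
  have hs : ‖1 - t‖ₑ ≤ 1 := by
    rw [← ofReal_norm, Real.norm_of_nonneg (sub_nonneg.2 ht.2), ENNReal.ofReal_le_one]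
    linarith [ht.1]
  have ht' : ‖t‖ₑ ≤ 1 := by
    rw [← ofReal_norm, Real.norm_of_nonneg ht.1, ENNReal.ofReal_le_one]
    exact ht.2
  simp only [displacementMap_sub_displacementMap]
  calc eLpNorm (fun q => (1 - t) • (q.1 - q.2) + t • (T q.1 - T' q.2)) p θ
      ≤ eLpNorm ((1 - t) • fun q : E × E => q.1 - q.2) p θ +
          eLpNorm (t • fun q : E × E => T q.1 - T' q.2) p θ :=
        eLpNorm_add_le (by fun_prop) (by fun_prop) hp
    _ ≤ 1 * eLpNorm (fun q => q.1 - q.2) p θ + 1 * eLpNorm (fun q => T q.1 - T' q.2) p θ := by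
        rw [eLpNorm_const_smul, eLpNorm_const_smul]
        gcongr
    _ = _ := by rw [one_mul, one_mul]

lemma IsCoupling.wassersteinEDist_map_displacementMap_le {μ μ' : Measure E}
    (hθ : IsCoupling θ μ μ') (hp : 1 ≤ p) (hT : Measurable T) (hT' : Measurable T')
    (ht : t ∈ Icc (0 : ℝ) 1) :
    wassersteinEDist p (μ.map (displacementMap T t)) (μ'.map (displacementMap T' t)) ≤
      eLpNorm (fun q => q.1 - q.2) p θ + eLpNorm (fun q => T q.1 - T' q.2) p θ := by
  have hTt := measurable_displacementMap hT t
  have hT't := measurable_displacementMap hT' t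
  have hcoupling := isCoupling_map_prodMk ((hTt.measurePreserving μ).comp hθ.measurePreserving_fst)
    ((hT't.measurePreserving μ').comp hθ.measurePreserving_snd)
  calc _ ≤ _ := wassersteinEDist_le hcoupling
    _ = eLpNorm (fun q => displacementMap T t q.1 - displacementMap T' t q.2) p θ :=
        eLpNorm_fst_sub_snd_map (hTt.comp measurable_fst) (hT't.comp measurable_snd)
    _ ≤ _ := eLpNorm_displacementMap_sub_le hp hT hT' ht

lemma lintegral_displacementMap_sub_sq_add_velocity_sub_sq_le (hT : Measurable T)
    (hT' : Measurable T') (ht : t ∈ Icc (0 : ℝ) 1) :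
    ∫⁻ q, ENNReal.ofReal (‖displacementMap T t q.1 - displacementMap T' t q.2‖ ^ 2 +
        ‖(T q.1 - q.1) - (T' q.2 - q.2)‖ ^ 2) ∂θ ≤
      2 * (eLpNorm (fun q => q.1 - q.2) 2 θ + eLpNorm (fun q => T q.1 - T' q.2) 2 θ) ^ 2 := by
  have hvelocity : eLpNorm (fun q => (T q.1 - q.1) - (T' q.2 - q.2)) 2 θ ≤
      eLpNorm (fun q => q.1 - q.2) 2 θ + eLpNorm (fun q => T q.1 - T' q.2) 2 θ := by
    have hcomm : (fun q : E × E => (T q.1 - q.1) - (T' q.2 - q.2)) =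
        (fun q => T q.1 - T' q.2) - fun q => q.1 - q.2 := funext fun q => sub_sub_sub_comm ..
    rw [hcomm, add_comm]
    exact eLpNorm_sub_le (by fun_prop) (by fun_prop) one_le_two
  simp only [ENNReal.ofReal_add (sq_nonneg _) (sq_nonneg _)]
  rw [lintegral_add_right _ (by fun_prop), lintegral_ofReal_norm_sq, lintegral_ofReal_norm_sq,
    two_mul]
  gcongr
  exact eLpNorm_displacementMap_sub_le one_le_two hT hT' ht

end Interpolation

section Geodesics

variable {E : Type*} [NormedAddCommGroup E] [InnerProductSpace ℝ E] [CompleteSpace E]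
  [SecondCountableTopology E] [MeasurableSpace E] [BorelSpace E] {μ ν : ℕ → Measure E}
  {μl νl : Measure E} {T : ℕ → E → E} {Tl : E → E}

lemma exists_isCoupling_tendsto_eLpNorm_map_sub [∀ k, IsProbabilityMeasure (μ k)]
    [IsProbabilityMeasure μl] (hμl : Dense {v | NullOnTransversals μl v})
    (hμl_mom : MemLp id 2 μl) (hνl_mom : MemLp id 2 νl)
    (hμ : Tendsto (fun k => wassersteinEDist 2 (μ k) μl) atTop (𝓝 0))
    (hν : Tendsto (fun k => wassersteinEDist 2 (ν k) νl) atTop (𝓝 0))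
    (hT : ∀ k, MeasurePreserving (T k) (μ k) (ν k)) (hTl : MeasurePreserving Tl μl νl)
    (hTopt : ∀ k, eLpNorm (fun x => x - T k x) 2 (μ k) = wassersteinEDist 2 (μ k) (ν k))
    (hTlopt : eLpNorm (fun x => x - Tl x) 2 μl = wassersteinEDist 2 μl νl) :
    ∃ θ : ℕ → Measure (E × E), (∀ k, IsCoupling (θ k) μl (μ k)) ∧
      Tendsto (fun k => eLpNorm (fun q => q.1 - q.2) 2 (θ k)) atTop (𝓝 0) ∧
      Tendsto (fun k => eLpNorm (fun q => Tl q.1 - T k q.2) 2 (θ k)) atTop (𝓝 0) := by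
  have hνprob (k) : IsProbabilityMeasure (ν k) :=
    (hT k).map_eq ▸ Measure.isProbabilityMeasure_map (hT k).measurable.aemeasurable
  have hνlprob : IsProbabilityMeasure νl :=
    hTl.map_eq ▸ Measure.isProbabilityMeasure_map hTl.measurable.aemeasurable
  set W := wassersteinEDist 2 μl νl
  simp only [wassersteinEDist_comm (μ _)] at hμ
  obtain ⟨θ, hθ, hθcost⟩ := exists_isCoupling_tendsto_eLpNorm hμ
  obtain ⟨η, hη, hηcost⟩ := exists_isCoupling_tendsto_eLpNorm hν
  have := fun k => (hθ k).isFiniteMeasure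
  choose ρ hρ hglue using fun k => exists_isCoupling_glue one_le_two (hη k)
    (hθ k).measurePreserving_fst ((hT k).comp (hθ k).measurePreserving_snd)
  have hρcost : Tendsto (fun k => eLpNorm (fun q => q.1 - q.2) 2 (ρ k)) atTop (𝓝 W) := by
    have hle (k) : eLpNorm (fun q => q.1 - q.2) 2 (ρ k) ≤
        eLpNorm (fun q => q.1 - q.2) 2 (θ k) +
          (wassersteinEDist 2 μl (μ k) + W + wassersteinEDist 2 (ν k) νl) +
          eLpNorm (fun q => q.1 - q.2) 2 (η k) := by
      refine (hglue k id measurable_id).1.trans (add_le_add_left ?_ _)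
      refine ((hθ k).eLpNorm_fst_sub_map_snd_le one_le_two (hT k).measurable).trans ?_
      rw [hTopt, wassersteinEDist_comm μl, wassersteinEDist_comm (ν k)]
      gcongr
      exact wassersteinEDist_le_add_add one_le_two ..
    refine tendsto_of_tendsto_of_tendsto_of_le_of_le tendsto_const_nhds ?_
      (fun k => wassersteinEDist_le (hρ k)) hle
    simpa using (hθcost.add ((hμ.add_const W).add hν)).add hηcost
  have hρmap := IsCoupling.tendsto_eLpNorm_map_sub hρ hμl hνl_mom hTl
    (wassersteinEDist_ne_top_of_memLp hμl_mom hνl_mom) hTlopt hρcost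
  refine ⟨θ, hθ, hθcost, tendsto_of_tendsto_of_tendsto_of_le_of_le tendsto_const_nhds ?_
    (fun _ => zero_le) fun k => (hglue k Tl hTl.measurable).2⟩
  simpa only [add_zero] using hρmap.add hηcost

theorem geodesic_TL2_stability_general [∀ k, IsProbabilityMeasure (μ k)]
    [IsProbabilityMeasure μl] (hμl : Dense {v | NullOnTransversals μl v})
    (hμl_mom : MemLp id 2 μl) (hνl_mom : MemLp id 2 νl)
    (hμ : Tendsto (fun k => wassersteinEDist 2 (μ k) μl) atTop (𝓝 0))
    (hν : Tendsto (fun k => wassersteinEDist 2 (ν k) νl) atTop (𝓝 0))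
    (hT : ∀ k, MeasurePreserving (T k) (μ k) (ν k)) (hTl : MeasurePreserving Tl μl νl)
    (hTopt : ∀ k, eLpNorm (fun x => x - T k x) 2 (μ k) = wassersteinEDist 2 (μ k) (ν k))
    (hTlopt : eLpNorm (fun x => x - Tl x) 2 μl = wassersteinEDist 2 μl νl) :
    Tendsto (fun k => ⨆ t ∈ Icc (0 : ℝ) 1, wassersteinEDist 2
        ((μ k).map (displacementMap (T k) t)) (μl.map (displacementMap Tl t))) atTop (𝓝 0) ∧
    ∃ θ : ℕ → Measure (E × E), (∀ k, IsCoupling (θ k) μl (μ k)) ∧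
      Tendsto (fun k => ⨆ t ∈ Icc (0 : ℝ) 1, ∫⁻ q, ENNReal.ofReal
          (‖displacementMap Tl t q.1 - displacementMap (T k) t q.2‖ ^ 2 +
            ‖(Tl q.1 - q.1) - (T k q.2 - q.2)‖ ^ 2) ∂(θ k)) atTop (𝓝 0) := by
  obtain ⟨θ, hθ, hdist, hmap⟩ := exists_isCoupling_tendsto_eLpNorm_map_sub hμl hμl_mom hνl_mom
    hμ hν hT hTl hTopt hTlopt
  have hsum := by simpa only [add_zero] using hdist.add hmap
  refine ⟨tendsto_of_tendsto_of_tendsto_of_le_of_le tendsto_const_nhds hsum (fun _ => zero_le)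
    fun k => iSup₂_le fun t ht => ?_, θ, hθ, ?_⟩
  · rw [wassersteinEDist_comm]
    exact (hθ k).wassersteinEDist_map_displacementMap_le one_le_two hTl.measurable
      (hT k).measurable ht
  · refine tendsto_of_tendsto_of_tendsto_of_le_of_le tendsto_const_nhds ?_ (fun _ => zero_le)
      fun k => iSup₂_le fun t ht => lintegral_displacementMap_sub_sq_add_velocity_sub_sq_le
        hTl.measurable (hT k).measurable ht
    simpa using ENNReal.Tendsto.const_mul (ENNReal.Tendsto.pow (n := 2) hsum)
      (.inr ENNReal.ofNat_ne_top)

end Geodesics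

lemma tendsto_ennreal_sq_nhds_zero_iff {ι : Type*} {l : Filter ι} {u : ι → ℝ≥0∞} :
    Tendsto (fun i => u i ^ 2) l (𝓝 0) ↔ Tendsto u l (𝓝 0) := by
  have h : Tendsto u l (𝓝 0) ↔ Tendsto (fun i => u i ^ 2) l (𝓝 (0 ^ 2)) :=
    (ENNReal.powOrderIso 2 two_ne_zero).toHomeomorph.isEmbedding.tendsto_nhds_iff
  rw [h, zero_pow two_ne_zero]

lemma memLp_two_iff_lintegral_ofReal_norm_sq_lt_top {α F : Type*} [MeasurableSpace α]
    [NormedAddCommGroup F] {m : Measure α} {f : α → F} (hf : AEStronglyMeasurable f m) :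
    MemLp f 2 m ↔ ∫⁻ x, ENNReal.ofReal (‖f x‖ ^ 2) ∂m < ⊤ := by
  rw [lintegral_ofReal_norm_sq, ENNReal.pow_lt_top_iff]
  simp [MemLp, hf]

lemma W2sq_eq {d : ℕ} (μ ν : Measure (EuclideanSpace ℝ (Fin d))) :
    W2sq μ ν = wassersteinEDist 2 μ ν ^ 2 := by
  simp only [W2sq, wassersteinEDist_sq, lintegral_ofReal_norm_sq]
  refine le_antisymm (le_iInf₂ fun π hπ => sInf_le ⟨π, hπ.1, hπ.2, rfl⟩) (le_sInf ?_)
  rintro _ ⟨π, h₁, h₂, rfl⟩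
  exact iInf₂_le π ⟨h₁, h₂⟩
/-- Uniform-in-time stability of Wasserstein geodesics: with
`μ_k → μ`, `ν_k → ν` in quadratic Wasserstein distance, optimal transport maps `T_k, T`,
and displacement interpolants `μ_{k,t} = (T_{k,t})_# μ_k`, `μ_t = (T_t)_# μ` (where
`T_{k,t} = (1−t)id + tT_k`, `T_t = (1−t)id + tT`), we have:
(i) `sup_{t ∈ [0,1]} d_2(μ_{k,t}, μ_t) → 0` and
(ii) there are couplings `θ_k` of `μ` and `μ_k` with
`sup_{t∈[0,1]} ∫ (|T_t(x) − T_{k,t}(y)|² + |(T(x)−x) − (T_k(y)−y)|²) dθ_k → 0`. -/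
theorem geodesic_TL2_stability
    (d : ℕ)
    (μ : ℕ → Measure (EuclideanSpace ℝ (Fin d))) (μl : Measure (EuclideanSpace ℝ (Fin d)))
    (ν : ℕ → Measure (EuclideanSpace ℝ (Fin d))) (νl : Measure (EuclideanSpace ℝ (Fin d)))
    (hμprob : ∀ k, IsProbabilityMeasure (μ k)) (hμlprob : IsProbabilityMeasure μl)
    (hνprob : ∀ k, IsProbabilityMeasure (ν k)) (hνlprob : IsProbabilityMeasure νl)
    (hμac : ∀ k, μ k ≪ volume) (hμlac : μl ≪ volume)
    (hμmom : ∀ k, (∫⁻ x, ENNReal.ofReal (‖x‖ ^ 2) ∂(μ k)) < ⊤)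
    (hμlmom : (∫⁻ x, ENNReal.ofReal (‖x‖ ^ 2) ∂μl) < ⊤)
    (hνmom : ∀ k, (∫⁻ x, ENNReal.ofReal (‖x‖ ^ 2) ∂(ν k)) < ⊤)
    (hνlmom : (∫⁻ x, ENNReal.ofReal (‖x‖ ^ 2) ∂νl) < ⊤)
    (hμconv : Tendsto (fun k => W2sq (μ k) μl) atTop (𝓝 0))
    (hνconv : Tendsto (fun k => W2sq (ν k) νl) atTop (𝓝 0))
    (T : ℕ → EuclideanSpace ℝ (Fin d) → EuclideanSpace ℝ (Fin d))
    (Tl : EuclideanSpace ℝ (Fin d) → EuclideanSpace ℝ (Fin d))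
    (hTmeas : ∀ k, Measurable (T k)) (hTlmeas : Measurable Tl)
    (hTpush : ∀ k, (μ k).map (T k) = ν k) (hTlpush : μl.map Tl = νl)
    (hTopt : ∀ k, (∫⁻ x, ENNReal.ofReal (‖x - T k x‖ ^ 2) ∂(μ k)) = W2sq (μ k) (ν k))
    (hTlopt : (∫⁻ x, ENNReal.ofReal (‖x - Tl x‖ ^ 2) ∂μl) = W2sq μl νl) :
    Tendsto (fun k => ⨆ t ∈ Icc (0:ℝ) 1,
        W2sq ((μ k).map (fun x => (1 - t) • x + t • T k x))
          (μl.map (fun x => (1 - t) • x + t • Tl x)))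
      atTop (𝓝 0) ∧
    ∃ θ : ℕ → Measure (EuclideanSpace ℝ (Fin d) × EuclideanSpace ℝ (Fin d)),
      (∀ k, (θ k).map Prod.fst = μl ∧ (θ k).map Prod.snd = μ k) ∧
      Tendsto (fun k => ⨆ t ∈ Icc (0:ℝ) 1,
          ∫⁻ q, ENNReal.ofReal
            (‖((1 - t) • q.1 + t • Tl q.1) - ((1 - t) • q.2 + t • T k q.2)‖ ^ 2 +
              ‖(Tl q.1 - q.1) - (T k q.2 - q.2)‖ ^ 2) ∂(θ k))
        atTop (𝓝 0) := by
  have hpow := (ENNReal.powOrderIso 2 two_ne_zero).injective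
  simp only [W2sq_eq, lintegral_ofReal_norm_sq, tendsto_ennreal_sq_nhds_zero_iff,
    ← ENNReal.iSup₂_pow_of_ne_zero _ two_ne_zero] at hμconv hνconv hTopt hTlopt ⊢
  exact geodesic_TL2_stability_general
    (by simp [nullOnTransversals_of_absolutelyContinuous hμlac])
    ((memLp_two_iff_lintegral_ofReal_norm_sq_lt_top measurable_id.aestronglyMeasurable).2 hμlmom)
    ((memLp_two_iff_lintegral_ofReal_norm_sq_lt_top measurable_id.aestronglyMeasurable).2 hνlmom)
    hμconv hνconv (fun k => ⟨hTmeas k, hTpush k⟩) ⟨hTlmeas, hTlpush⟩ (fun k => hpow (hTopt k))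
    (hpow hTlopt)
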